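/- arXiv:1009.1107 — 10 statements merged into one kernel-verified Lean document; each statement's English description precedes it below -/
import Mathlib

section
/- Let X be a set and let L be a unital ℝ-algebra homomorphism from the Banach algebra ℓ∞(X, ℝ) of bounded real-valued functions on X (with pointwise operations and the supremum norm) to ℝ. Then there exists an ultrafilter 𝒰 on X such that for every f ∈ ℓ∞(X, ℝ), the function f converges to L(f) along 𝒰; that is, Tendsto (fun x => f x) 𝒰 (𝓝 (L f)). -/
open scoped ENNReal

/-!
Say that a nonnegative `f ∈ ker L` witnesses `s ⊆ X` if `1 ≤ f` off `s`. The sets having a witness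
form a filter (add witnesses to intersect), and it is proper: a witness of `∅` would satisfy
`1 ≤ f` everywhere, so its pointwise inverse is bounded and `f` is a unit in `ker L`. For any `f`
and `ε > 0`, the element `(ε⁻¹ • (f - L f))²` witnesses `{x | |f x - L f| < ε}`, so every `f` tends
to `L f` along this filter, hence along any ultrafilter finer than it.
-/

/-- A bounded function that is at least `1` everywhere is invertible in `ℓ∞`, so no character
vanishes on it. -/
theorem map_ne_zero_of_one_le {X : Type*} (L : lp (fun _ : X => ℝ) ∞ →ₐ[ℝ] ℝ)
    (f : lp (fun _ : X => ℝ) ∞) (hf : ∀ x, 1 ≤ f x) : L f ≠ 0 := by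
  intro h0
  have hg : Memℓp (fun x => (f x)⁻¹) ∞ := by
    refine memℓp_infty ⟨1, ?_⟩
    rintro _ ⟨x, rfl⟩
    have := hf x
    simp only [norm_inv, Real.norm_eq_abs]
    exact inv_le_one_of_one_le₀ (this.trans (le_abs_self _))
  let g : lp (fun _ : X => ℝ) ∞ := ⟨fun x => (f x)⁻¹, hg⟩
  have hfg : f * g = 1 := by
    ext x
    have := hf x
    rw [lp.infty_coeFn_mul, lp.infty_coeFn_one]
    exact mul_inv_cancel₀ (by linarith)
  have h1 := congrArg L hfg
  rw [map_mul, map_one, h0, zero_mul] at h1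
  exact zero_ne_one h1

/-- The filter of sets `s` off which some nonnegative `f ∈ ker L` is at least `1`. -/
def kerFilter {X : Type*} (L : lp (fun _ : X => ℝ) ∞ →ₐ[ℝ] ℝ) : Filter X where
  sets := {s | ∃ f : lp (fun _ : X => ℝ) ∞, L f = 0 ∧ (∀ x, 0 ≤ f x) ∧ ∀ x, x ∉ s → 1 ≤ f x}
  univ_sets := ⟨0, map_zero L, fun x => by simp, fun x hx => absurd (Set.mem_univ x) hx⟩
  sets_of_superset := by
    rintro s t ⟨f, h0, hp, h1⟩ hst
    exact ⟨f, h0, hp, fun x hx => h1 x fun hs => hx (hst hs)⟩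
  inter_sets := by
    rintro s t ⟨f, hf0, hfp, hf1⟩ ⟨g, hg0, hgp, hg1⟩
    refine ⟨f + g, by rw [map_add, hf0, hg0, add_zero], fun x => ?_, fun x hx => ?_⟩
    · rw [lp.coeFn_add]
      exact add_nonneg (hfp x) (hgp x)
    · rw [lp.coeFn_add, Pi.add_apply]
      have hf := hfp x
      have hg := hgp x
      by_cases hs : x ∈ s
      · have := hg1 x fun ht => hx ⟨hs, ht⟩
        linarith
      · have := hf1 x hs
        linarith

theorem mem_kerFilter {X : Type*} (L : lp (fun _ : X => ℝ) ∞ →ₐ[ℝ] ℝ) (s : Set X) :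
    s ∈ kerFilter L ↔ ∃ f : lp (fun _ : X => ℝ) ∞,
      L f = 0 ∧ (∀ x, 0 ≤ f x) ∧ ∀ x, x ∉ s → 1 ≤ f x :=
  Iff.rfl

theorem kerFilter_neBot {X : Type*} (L : lp (fun _ : X => ℝ) ∞ →ₐ[ℝ] ℝ) :
    (kerFilter L).NeBot := by
  rw [← Filter.empty_mem_iff_bot.not.trans Filter.neBot_iff.symm, mem_kerFilter]
  rintro ⟨f, h0, -, h1⟩
  exact map_ne_zero_of_one_le L f (fun x => h1 x (Set.notMem_empty x)) h0

theorem tendsto_kerFilter {X : Type*} (L : lp (fun _ : X => ℝ) ∞ →ₐ[ℝ] ℝ)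
    (f : lp (fun _ : X => ℝ) ∞) :
    Filter.Tendsto (fun x => f x) (kerFilter L) (nhds (L f)) := by
  rw [Metric.tendsto_nhds]
  intro ε hε
  let g : lp (fun _ : X => ℝ) ∞ := ε⁻¹ • (f - L f • (1 : lp (fun _ : X => ℝ) ∞))
  have hg : ∀ x, g x = ε⁻¹ * (f x - L f) := by
    intro x
    simp only [g, lp.coeFn_smul, lp.coeFn_sub, lp.infty_coeFn_one, Pi.smul_apply, Pi.sub_apply,
      Pi.one_apply, smul_eq_mul, mul_one]
  have hLg : L g = 0 := by
    simp only [g, map_smul, map_sub, map_one, smul_eq_mul, mul_one, sub_self, mul_zero]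
  refine (mem_kerFilter L _).2 ⟨g * g, by rw [map_mul, hLg, zero_mul], fun x => ?_, fun x hx => ?_⟩
  · rw [lp.infty_coeFn_mul]
    exact mul_self_nonneg _
  · have hx' : ε ≤ |f x - L f| := by
      simpa [Real.dist_eq] using hx
    rw [lp.infty_coeFn_mul, Pi.mul_apply, ← abs_mul_abs_self, hg, abs_mul,
      abs_of_pos (inv_pos.2 hε)]
    have h1 : 1 ≤ ε⁻¹ * |f x - L f| := by
      rwa [← div_eq_inv_mul, one_le_div hε]
    nlinarith

/-- Every unital `ℝ`-algebra homomorphism from `ℓ∞(X, ℝ)` to `ℝ` is given by the limit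
along some ultrafilter on `X`. -/
theorem stmt_0 {X : Type*} (L : lp (fun _ : X => ℝ) ∞ →ₐ[ℝ] ℝ) :
    ∃ 𝒰 : Ultrafilter X, ∀ f : lp (fun _ : X => ℝ) ∞,
      Filter.Tendsto (fun x => f x) (𝒰 : Filter X) (nhds (L f)) := by
  haveI := kerFilter_neBot L
  exact ⟨Ultrafilter.of (kerFilter L), fun f =>
    (tendsto_kerFilter L f).mono_left (Ultrafilter.of_le _)⟩
end

section
/- Let X be a topological space and let ψ be a unital ℝ-algebra homomorphism from the algebra C_b(X, ℝ) of bounded continuous real-valued functions on X to ℝ. Then for every natural number n, every family f₁, …, fₙ of bounded continuous real-valued functions on X, and every ε > 0, there exists a point p ∈ X such that |ψ(fⱼ) − fⱼ(p)| < ε for j = 1, …, n. (In other words, point evaluations are dense in the set of characters of C_b(X, ℝ) with respect to the weak* topology.) -/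
/-! The function `g = ∑ⱼ (fⱼ - ψ(fⱼ))²` lies in the kernel of `ψ`, so it is not a unit of
`C_b(X, ℝ)`. If every point `p` had some `j` with `|ψ(fⱼ) - fⱼ(p)| ≥ ε`, then `g ≥ ε²`
everywhere and `g` would be invertible by `isUnit_of_pos_le`. -/

/-- A bounded continuous function bounded below by a positive constant is invertible in
`C_b(X, ℝ)`: its pointwise reciprocal is again continuous and bounded. -/
theorem isUnit_of_pos_le {X : Type*} [TopologicalSpace X]
    (g : BoundedContinuousFunction X ℝ) (c : ℝ) (hc : 0 < c) (hg : ∀ x, c ≤ g x) :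
    IsUnit g := by
  have hpos : ∀ x, 0 < g x := fun x => hc.trans_le (hg x)
  refine IsUnit.of_mul_eq_one (BoundedContinuousFunction.ofNormedAddCommGroup
    (fun x => (g x)⁻¹) (g.continuous.inv₀ fun x => (hpos x).ne') c⁻¹ fun x => ?_) ?_
  · rw [Real.norm_of_nonneg (inv_nonneg.2 (hpos x).le)]
    exact inv_anti₀ hc (hg x)
  · ext x
    simpa using mul_inv_cancel₀ (hpos x).ne'


/-- Point evaluations are weak-* dense in the characters of `C_b(X, ℝ)`: given a unital
`ℝ`-algebra homomorphism `ψ : C_b(X, ℝ) → ℝ`, finitely many `f₁, …, fₙ` and `ε > 0`,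
there is a point `p ∈ X` with `|ψ(fⱼ) − fⱼ(p)| < ε` for all `j`. -/
theorem stmt_2 {X : Type*} [TopologicalSpace X]
    (ψ : BoundedContinuousFunction X ℝ →ₐ[ℝ] ℝ) (n : ℕ)
    (f : Fin n → BoundedContinuousFunction X ℝ) (ε : ℝ) (hε : 0 < ε) :
    ∃ p : X, ∀ j : Fin n, |ψ (f j) - f j p| < ε := by
  by_contra! h
  let g : BoundedContinuousFunction X ℝ :=
    ∑ j, (f j - algebraMap ℝ (BoundedContinuousFunction X ℝ) (ψ (f j))) ^ 2
  have hψ : ψ g = 0 := by simp [g]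
  have hval : ∀ p, g p = ∑ j, (f j p - ψ (f j)) ^ 2 := fun p => by
    simp [g, BoundedContinuousFunction.algebraMap_apply]
  have hg : ∀ p, ε ^ 2 ≤ g p := fun p => by
    obtain ⟨j, hj⟩ := h p
    rw [hval]
    calc ε ^ 2 ≤ |ψ (f j) - f j p| ^ 2 := pow_le_pow_left₀ hε.le hj 2
      _ = (f j p - ψ (f j)) ^ 2 := by rw [sq_abs]; ring
      _ ≤ _ := Finset.single_le_sum (f := fun j => (f j p - ψ (f j)) ^ 2)
          (fun i _ => sq_nonneg _) (Finset.mem_univ j)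
  exact ((isUnit_of_pos_le g (ε ^ 2) (by positivity) hg).map ψ).ne_zero hψ
end

section
/- Let X be a compact topological space (Hausdorffness is not assumed), and let φ be a unital ℝ-algebra homomorphism from the algebra C(X, ℝ) of continuous real-valued functions on X (with pointwise operations) to ℝ. Then there exists a point p ∈ X such that φ(f) = f(p) for every f ∈ C(X, ℝ). -/
/-- If `X` is a compact topological space, then every unital `ℝ`-algebra homomorphism
`φ : C(X, ℝ) → ℝ` is evaluation at some point `p ∈ X`. -/
theorem stmt_3 {X : Type*} [TopologicalSpace X] [CompactSpace X]
    (φ : C(X, ℝ) →ₐ[ℝ] ℝ) :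
    ∃ p : X, ∀ f : C(X, ℝ), φ f = f p := by
  by_contra! hne
  choose f hf using hne
  -- The nonnegative functions `(f p - φ (f p))²` lie in `ker φ`, the `p`-th being nonzero at `p`.
  -- By compactness a finite sum of them is positive everywhere, hence a unit in `ker φ`.
  let g : X → C(X, ℝ) := fun p => (f p - algebraMap ℝ C(X, ℝ) (φ (f p))) ^ 2
  have hφg (p : X) : φ (g p) = 0 := by simp [g]
  have hg_nonneg (p x : X) : 0 ≤ g p x := by
    simpa [g] using sq_nonneg (f p x - φ (f p))
  have hg_self (p : X) : g p p ≠ 0 := by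
    simpa [g, sub_eq_zero] using (hf p).symm
  obtain ⟨t, ht⟩ := isCompact_univ.elim_finite_subcover (fun p => {x | g p x ≠ 0})
    (fun p => isOpen_ne_fun (g p).continuous continuous_const)
    (fun p _ => Set.mem_iUnion.2 ⟨p, hg_self p⟩)
  have hunit : IsUnit (∑ p ∈ t, g p) := by
    rw [ContinuousMap.isUnit_iff_forall_ne_zero]
    intro x
    obtain ⟨p, hp, hpx⟩ := Set.mem_iUnion₂.1 (ht (Set.mem_univ x))
    rw [ContinuousMap.sum_apply]
    exact (Finset.sum_pos' (fun q _ => hg_nonneg q x)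
      ⟨p, hp, (hg_nonneg p x).lt_of_ne' hpx⟩).ne'
  have hzero : φ (∑ p ∈ t, g p) = 0 := by simp [map_sum, hφg]
  exact (hunit.map φ).ne_zero hzero
end

section
/- Let X be a locally compact Hausdorff, σ-compact topological space, and let φ be a unital ℝ-algebra homomorphism from the algebra C(X, ℝ) of all continuous real-valued functions on X (with pointwise operations) to ℝ. Then there exists a point p ∈ X such that φ(f) = f(p) for every f ∈ C(X, ℝ). No continuity assumption on φ is made. -/
/-!
Subtracting constants, it suffices to find a common zero of all functions in `ker φ`. A function
of `ker φ` must vanish somewhere, since otherwise it is a unit; applying this to sums of squares,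
any finitely many functions of `ker φ` have a common zero. To pass from finite subfamilies to all
of `ker φ` by compactness, one needs a single function of `ker φ` with compact zero set: take
`h - φ h`, where `h` has compact sublevel sets. Such an `h` exists by σ-compactness and is
obtained from a partition of unity.
-/

/-- The function is obtained by patching together, over the sets of a compact exhaustion `K`,
constants that dominate the index `K.find x` of the first member of `K` containing `x`. -/
lemma exists_continuousMap_isCompact_sublevel (X : Type*) [TopologicalSpace X]
    [LocallyCompactSpace X] [T2Space X] [SigmaCompactSpace X] :
    ∃ h : C(X, ℝ), ∀ r : ℝ, IsCompact {x | h x ≤ r} := by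
  let K := CompactExhaustion.choice X
  obtain ⟨h, hh⟩ := exists_continuous_forall_mem_convex_of_local_const
    (t := fun x : X => Set.Ici (K.find x : ℝ)) (fun x => convex_Ici _) (fun x => by
      obtain ⟨n, hn⟩ := K.exists_mem_nhds x
      refine ⟨(n : ℝ), ?_⟩
      filter_upwards [hn] with y hy
      exact Nat.cast_le (α := ℝ).2 (K.mem_iff_find_le.1 hy))
  refine ⟨h, fun r => (K.isCompact ⌊r⌋₊).of_isClosed_subset
    (isClosed_le h.continuous continuous_const) fun x hx => ?_⟩
  exact K.mem_iff_find_le.2 (Nat.le_floor ((hh x).trans hx))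

lemma exists_zero_of_map_eq_zero {X : Type*} [TopologicalSpace X] (φ : C(X, ℝ) →ₐ[ℝ] ℝ)
    {f : C(X, ℝ)} (hf : φ f = 0) : ∃ x, f x = 0 := by
  by_contra! hne
  have hu : IsUnit f := ContinuousMap.isUnit_iff_forall_ne_zero f |>.2 hne
  exact (hu.map φ).ne_zero hf

/-- If `X` is a locally compact Hausdorff σ-compact topological space, then every unital
`ℝ`-algebra homomorphism `φ : C(X, ℝ) → ℝ` (no continuity assumed) is evaluation at
some point `p ∈ X`. -/
theorem stmt_4 {X : Type*} [TopologicalSpace X] [LocallyCompactSpace X] [T2Space X]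
    [SigmaCompactSpace X] (φ : C(X, ℝ) →ₐ[ℝ] ℝ) :
    ∃ p : X, ∀ f : C(X, ℝ), φ f = f p := by
  obtain ⟨h, hh⟩ := exists_continuousMap_isCompact_sublevel X
  let u : C(X, ℝ) → C(X, ℝ) := fun f => f - algebraMap ℝ C(X, ℝ) (φ f)
  have hu (f) : φ (u f) = 0 := by simp [u]
  have hu' (f x) : u f x = f x - φ f := by simp [u]
  have hne : ({x | h x ≤ φ h} ∩ ⋂ f, {x | u f x = 0}).Nonempty := by
    refine (hh (φ h)).inter_iInter_nonempty _
      (fun f => isClosed_eq (u f).continuous continuous_const) fun s => ?_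
    have h0 : φ (u h ^ 2 + ∑ f ∈ s, u f ^ 2) = 0 := by simp [hu]
    obtain ⟨x, hx⟩ := exists_zero_of_map_eq_zero φ h0
    simp only [ContinuousMap.add_apply, ContinuousMap.sum_apply, ContinuousMap.pow_apply] at hx
    have hs : ∀ f ∈ s, 0 ≤ u f x ^ 2 := fun f _ => sq_nonneg _
    rw [add_eq_zero_iff_of_nonneg (sq_nonneg _) (Finset.sum_nonneg hs),
      Finset.sum_eq_zero_iff_of_nonneg hs] at hx
    refine ⟨x, ?_, Set.mem_iInter₂.2 fun f hf => pow_eq_zero_iff two_ne_zero |>.1 (hx.2 f hf)⟩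
    have hxh := pow_eq_zero_iff two_ne_zero |>.1 hx.1
    rw [hu'] at hxh
    exact (sub_eq_zero.1 hxh).le
  obtain ⟨p, -, hp⟩ := hne
  refine ⟨p, fun f => ?_⟩
  have hpf : u f p = 0 := Set.mem_iInter.1 hp f
  rw [hu'] at hpf
  exact (sub_eq_zero.1 hpf).symm
end

section
/- Let X be a compact Hausdorff topological space, and let I be an ideal of the ring C(X, ℝ) of continuous real-valued functions on X which is a closed subset of C(X, ℝ) with respect to the supremum norm. Let E = {x ∈ X : g(x) = 0 for every g ∈ I}. Then I = {f ∈ C(X, ℝ) : f(x) = 0 for every x ∈ E}. -/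
/-- Let `X` be a compact Hausdorff space and `I` a closed ideal of `C(X, ℝ)` (with respect to
the supremum-norm topology).  If `E = {x : ∀ g ∈ I, g x = 0}`, then `I` consists exactly of
the continuous functions vanishing on `E`. -/
theorem stmt_5 {X : Type*} [TopologicalSpace X] [CompactSpace X] [T2Space X]
    (I : Ideal C(X, ℝ)) (hI : IsClosed (I : Set C(X, ℝ))) :
    (I : Set C(X, ℝ)) = {f : C(X, ℝ) | ∀ x ∈ {x : X | ∀ g ∈ I, g x = 0}, f x = 0} := by
  -- Mathlib's `idealOfSet_ofIdeal_isClosed`: a closed ideal is the ideal of all functions vanishing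
  -- off `setOfIdeal I`, the complement of the common zero set of `I`.
  ext f
  conv_lhs => rw [← ContinuousMap.idealOfSet_ofIdeal_isClosed hI]
  rw [SetLike.mem_coe, ContinuousMap.mem_idealOfSet]
  simp only [Set.mem_compl_iff, ContinuousMap.notMem_setOfIdeal, Set.mem_ofPred_eq]
end

section
/- Let E be a nonempty set and let I be a proper ideal of the ring of all real-valued functions on E (with pointwise operations). Then there exists a proper (nontrivial) filter F on E such that I = {f : E → ℝ : {x ∈ E : f(x) = 0} ∈ F}; that is, f ∈ I if and only if the zero set of f belongs to F. -/
/-! An ideal of `E → ℝ` is determined by the zero sets of its members: by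
`mem_of_zeroSet_subset`, membership of `f` only requires its zero set to contain that of some
member. These zero sets are closed under intersection (take sums of squares), and hence generate
a filter, which is proper because a function without zeros is a unit. -/

/-- An ideal of `E → ℝ` contains every function vanishing wherever one of its members does:
since `ℝ` is a field, such an `f` is the multiple `(f / g) * g` of `g`. -/
theorem mem_of_zeroSet_subset {E : Type*} (I : Ideal (E → ℝ)) {f g : E → ℝ} (hg : g ∈ I)
    (h : ∀ x, g x = 0 → f x = 0) : f ∈ I := by
  have hfg : f = (f / g) * g := by
    funext x
    by_cases hx : g x = 0
    · simp [hx, h x hx]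
    · simp [hx]
  rw [hfg]
  exact I.mul_mem_left _ hg

/-- Every proper ideal `I` of the ring of all real-valued functions on a nonempty set `E`
comes from a proper filter `F` on `E`: `f ∈ I` iff the zero set of `f` belongs to `F`. -/
theorem stmt_6 {E : Type*} [Nonempty E] (I : Ideal (E → ℝ)) (hI : I ≠ ⊤) :
    ∃ F : Filter E, F.NeBot ∧ ∀ f : E → ℝ, f ∈ I ↔ {x : E | f x = 0} ∈ F := by
  -- The filter consists of the supersets of zero sets of members of `I`.
  let F : Filter E :=
    { sets := {S | ∃ g ∈ I, ∀ x, g x = 0 → x ∈ S}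
      univ_sets := ⟨0, I.zero_mem, fun x _ => Set.mem_univ x⟩
      sets_of_superset := by
        rintro S T ⟨g, hg, h⟩ hST
        exact ⟨g, hg, fun x hx => hST (h x hx)⟩
      inter_sets := by
        rintro S T ⟨g, hg, h⟩ ⟨k, hk, h'⟩
        -- Over `ℝ`, the zero set of `g * g + k * k` is the intersection of those of `g` and `k`.
        refine ⟨g * g + k * k, I.add_mem (I.mul_mem_left _ hg) (I.mul_mem_left _ hk),
          fun x hx => ?_⟩
        have hx' : g x * g x + k x * k x = 0 := hx
        obtain ⟨h1, h2⟩ := mul_self_add_mul_self_eq_zero.mp hx'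
        exact ⟨h x h1, h' x h2⟩ }
  refine ⟨F, ⟨fun hF => hI ?_⟩, fun f => ⟨fun hf => ⟨f, hf, fun x hx => hx⟩, ?_⟩⟩
  · -- A member of `I` without zeros forces `1 ∈ I`.
    have h0 : (∅ : Set E) ∈ F := Filter.empty_mem_iff_bot.mpr hF
    obtain ⟨g, hg, h⟩ := h0
    exact (Ideal.eq_top_iff_one I).mpr
      (mem_of_zeroSet_subset I hg fun x hx => (h x hx).elim)
  · rintro ⟨g, hg, h⟩
    exact mem_of_zeroSet_subset I hg h
end

section
/- Let E be a nonempty set and let F be a proper filter on E. Then the set I_F = {f : E → ℝ : {x ∈ E : f(x) = 0} ∈ F} is a proper ideal of the ring of all real-valued functions on E, and I_F is a maximal ideal if and only if F is an ultrafilter on E. -/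
/-!
`zeroSetIdeal F` consists of the functions vanishing on a member of `F`.

If it is maximal, it is prime; since `1_A * 1_{Aᶜ} = 0`, one of the two indicators lies in it, so
`Aᶜ ∈ F` or `A ∈ F`, for every `A`. Conversely, if `F` is an ultrafilter and `f` is not in the
ideal, then the complement of the zero set of `f` lies in `F`. On that complement `f⁻¹ * f = 1`, so
`1 - f⁻¹ * f` lies in the ideal, and every ideal containing it together with `f` contains `1`.
-/

/-- The ideal of real-valued functions on `E` whose zero set belongs to the filter `F`. -/
def zeroSetIdeal {E : Type*} (F : Filter E) : Ideal (E → ℝ) where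
  carrier := {f | {x : E | f x = 0} ∈ F}
  zero_mem' := by simp
  add_mem' {f g} hf hg := by
    filter_upwards [hf, hg] with x hx hy
    simp_all
  smul_mem' c f hf := by
    filter_upwards [hf] with x hx
    simp_all

theorem mem_zeroSetIdeal {E : Type*} {F : Filter E} {f : E → ℝ} :
    f ∈ zeroSetIdeal F ↔ {x : E | f x = 0} ∈ F := Iff.rfl

theorem one_notMem_zeroSetIdeal {E : Type*} (F : Filter E) [F.NeBot] :
    (1 : E → ℝ) ∉ zeroSetIdeal F := by
  simp [mem_zeroSetIdeal]

theorem indicator_mem_zeroSetIdeal {E : Type*} {F : Filter E} {A : Set E} :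
    A.indicator (1 : E → ℝ) ∈ zeroSetIdeal F ↔ Aᶜ ∈ F := by
  have : {x : E | A.indicator (1 : E → ℝ) x = 0} = Aᶜ := by
    ext x
    simp
  rw [mem_zeroSetIdeal, this]

theorem mem_or_compl_mem_of_isPrime {E : Type*} {F : Filter E}
    (h : (zeroSetIdeal F).IsPrime) (A : Set E) : A ∈ F ∨ Aᶜ ∈ F := by
  have hmul : A.indicator (1 : E → ℝ) * Aᶜ.indicator (1 : E → ℝ) ∈ zeroSetIdeal F := by
    have : A.indicator (1 : E → ℝ) * Aᶜ.indicator (1 : E → ℝ) = 0 := by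
      ext x
      by_cases hx : x ∈ A <;> simp [hx]
    rw [this]
    exact zero_mem _
  rcases h.mem_or_mem hmul with h1 | h1
  · exact Or.inr (indicator_mem_zeroSetIdeal.1 h1)
  · exact Or.inl (by simpa using indicator_mem_zeroSetIdeal.1 h1)

theorem isMaximal_zeroSetIdeal {E : Type*} (U : Ultrafilter E) :
    (zeroSetIdeal (U : Filter E)).IsMaximal := by
  rw [Ideal.isMaximal_iff]
  refine ⟨one_notMem_zeroSetIdeal _, fun J f hJ hf hfJ => ?_⟩
  have hc : {x : E | f x = 0}ᶜ ∈ U := Ultrafilter.compl_mem_iff_notMem.2 hf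
  have h1 : 1 - f⁻¹ * f ∈ zeroSetIdeal (U : Filter E) := by
    rw [mem_zeroSetIdeal]
    filter_upwards [hc] with x hx
    have hx' : f x ≠ 0 := hx
    simp [hx']
  simpa using J.add_mem (hJ h1) (J.mul_mem_left f⁻¹ hfJ)

/-- For a proper filter `F` on a nonempty set `E`, the set
`{f : E → ℝ | Z(f) ∈ F}` is a proper ideal of the ring of all real-valued functions on `E`,
and it is a maximal ideal if and only if `F` is an ultrafilter. -/
theorem stmt_7 {E : Type*} [Nonempty E] (F : Filter E) [F.NeBot] :
    ∃ I : Ideal (E → ℝ),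
      (I : Set (E → ℝ)) = {f : E → ℝ | {x : E | f x = 0} ∈ F} ∧ I ≠ ⊤ ∧
        (I.IsMaximal ↔ ∃ U : Ultrafilter E, (U : Filter E) = F) := by
  refine ⟨zeroSetIdeal F, rfl,
    (Ideal.ne_top_iff_one _).2 (one_notMem_zeroSetIdeal F), fun h => ?_, ?_⟩
  · refine ⟨Ultrafilter.ofComplNotMemIff F fun s => ⟨fun hs => ?_, fun hs hs' => ?_⟩, rfl⟩
    · exact (mem_or_compl_mem_of_isPrime h.isPrime s).resolve_right hs
    · exact F.empty_notMem (by simpa using F.inter_mem hs hs')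
  · rintro ⟨U, rfl⟩
    exact isMaximal_zeroSetIdeal U
end

section
/- Let n be a positive integer, let U ⊆ ℝⁿ be an open set, let p ∈ U, and let g : ℝⁿ → ℝ be infinitely differentiable on U (ContDiffOn ℝ ⊤ g U). Then there exist functions g₁, …, gₙ : ℝⁿ → ℝ, each infinitely differentiable on U, such that g(x) = g(p) + ∑_{j=1}^n (x_j − p_j)·g_j(x) for every x ∈ U. -/
/-!
The classical Hadamard formula `f x - f p = ∑ j, (x j - p j) * ∫₀¹ ∂ⱼf (p + t (x - p)) dt` needs the
segment from `p` to `x` to lie in the domain, so on a general open set `U` it is applied only to a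
globally smooth function. Let `φ` be a smooth bump function supported in `U` and equal to `1` near
`p`. Then `φ * g` is smooth on all of `ℝⁿ` and the formula applies to it (`exists_hadamard_global`).
The remainder `(1 - φ) * g` vanishes near `p`, so it is divisible by `∑ i, (x i - p i) ^ 2` within
the smooth functions on `U`, and
`(1 - φ x) * g x = ∑ j, (x j - p j) * ((x j - p j) * (1 - φ x) * g x / ∑ i, (x i - p i) ^ 2)`.
Smoothness of the integral in its parameter (`contDiff_integral_unitInterval`) is obtained by
writing it as a convolution with the indicator function of `(0, 1]`.
-/

open scoped ContDiff

/-- Smooth dependence on a parameter of an integral over `[0, 1]`. The integral is the value at `0`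
of the convolution of the indicator function of `(0, 1]` with `s ↦ χ s * F (x, -s)`, where the
cutoff `χ` makes the second factor compactly supported and equals `1` for `-s ∈ [0, 1]`. -/
lemma contDiff_integral_unitInterval {E : Type*} [NormedAddCommGroup E] [NormedSpace ℝ E]
    {F : E × ℝ → ℝ} (hF : ContDiff ℝ ∞ F) :
    ContDiff ℝ ∞ (fun x => ∫ t in (0 : ℝ)..1, F (x, t)) := by
  let χ : ContDiffBump (0 : ℝ) := ⟨1, 2, one_pos, one_lt_two⟩
  have key := MeasureTheory.contDiffOn_convolution_right_with_param_comp (μ := MeasureTheory.volume)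
    (n := (⊤ : ℕ∞)) (ContinuousLinearMap.mul ℝ ℝ) (s := (Set.univ : Set E))
    (v := fun _ => (0 : ℝ)) contDiffOn_const
    (f := (Set.Ioc (0 : ℝ) 1).indicator (fun _ => (1 : ℝ)))
    (g := fun x s => χ s * F (x, -s)) isOpen_univ (isCompact_closedBall (0 : ℝ) 2)
    (by
      intro x s _ hs
      have : χ s = 0 := χ.zero_of_le_dist (by
        rw [Metric.mem_closedBall, not_le] at hs
        exact hs.le)
      simp [this])
    ((MeasureTheory.locallyIntegrable_const (1 : ℝ)).indicator measurableSet_Ioc)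
    (by
      have : ContDiff ℝ ∞ (fun q : E × ℝ => χ q.2 * F (q.1, -q.2)) :=
        (χ.contDiff.comp contDiff_snd).mul
          (hF.comp (contDiff_fst.prodMk contDiff_snd.neg))
      exact this.contDiffOn)
  rw [contDiffOn_univ] at key
  convert key using 2 with x
  rw [MeasureTheory.convolution_def, intervalIntegral.integral_of_le zero_le_one,
    ← MeasureTheory.integral_indicator measurableSet_Ioc]
  congr 1
  ext t
  by_cases ht : t ∈ Set.Ioc (0 : ℝ) 1
  · have : χ (-t) = 1 := χ.one_of_mem_closedBall (by
      rw [mem_closedBall_zero_iff, norm_neg, Real.norm_of_nonneg ht.1.le]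
      exact ht.2)
    simp [ht, this]
  · simp [ht]

/-- Hadamard's lemma for a function smooth on all of `ℝⁿ`, with `H j x` the average of `∂ⱼf` over
the segment from `p` to `x`. -/
lemma exists_hadamard_global {n : ℕ} (p : Fin n → ℝ) {f : (Fin n → ℝ) → ℝ}
    (hf : ContDiff ℝ ∞ f) :
    ∃ H : Fin n → (Fin n → ℝ) → ℝ, (∀ j, ContDiff ℝ ∞ (H j)) ∧
      ∀ x, f x = f p + ∑ j, (x j - p j) * H j x := by
  have hf' : ContDiff ℝ ∞ (fderiv ℝ f) := hf.fderiv_right (by simp)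
  have hD : ∀ v : Fin n → ℝ, ContDiff ℝ ∞
      (fun q : (Fin n → ℝ) × ℝ => fderiv ℝ f (p + q.2 • (q.1 - p)) v) := fun v =>
    (hf'.comp (contDiff_const.add (contDiff_snd.smul (contDiff_fst.sub contDiff_const)))).clm_apply
      contDiff_const
  refine ⟨fun j x => ∫ t in (0 : ℝ)..1, fderiv ℝ f (p + t • (x - p)) (Pi.single j 1),
    fun j => contDiff_integral_unitInterval (hD _), fun x => ?_⟩
  have hc : ∀ v, Continuous (fun t : ℝ => fderiv ℝ f (p + t • (x - p)) v) := fun v =>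
    (hD v).continuous.comp (Continuous.prodMk_right x)
  have hderiv : ∀ t : ℝ, HasDerivAt (fun t : ℝ => f (p + t • (x - p)))
      (fderiv ℝ f (p + t • (x - p)) (x - p)) t := fun t => by
    have h1 : HasDerivAt (fun t : ℝ => p + t • (x - p)) (x - p) t := by
      simpa using ((hasDerivAt_id t).smul_const (x - p)).const_add p
    exact ((hf.differentiable (by simp)) _).hasFDerivAt.comp_hasDerivAt t h1
  have hftc := intervalIntegral.integral_eq_sub_of_hasDerivAt (a := 0) (b := 1)
    (fun t _ => hderiv t) ((hc _).intervalIntegrable _ _)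
  have hsum : ∀ t : ℝ, fderiv ℝ f (p + t • (x - p)) (x - p)
      = ∑ j, (x j - p j) * fderiv ℝ f (p + t • (x - p)) (Pi.single j 1) := fun t => by
    -- The derivative is generalized because the point where it is taken also contains `x - p`.
    generalize fderiv ℝ f (p + t • (x - p)) = L
    conv_lhs => rw [pi_eq_sum_univ' (x - p)]
    simp only [map_sum, map_smul, smul_eq_mul, Pi.sub_apply]
  simp only [hsum] at hftc
  rw [intervalIntegral.integral_finsetSum
    fun j _ => ((hc (Pi.single j 1)).const_mul (x j - p j)).intervalIntegrable _ _] at hftc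
  simp only [intervalIntegral.integral_const_mul, one_smul, zero_smul, add_zero,
    add_sub_cancel] at hftc
  rw [hftc]
  ring

/-- Hadamard-type lemma on an arbitrary open set: if `g` is smooth on an open set
`U ⊆ ℝⁿ` and `p ∈ U`, then there are functions `G j` smooth on `U` with
`g x = g p + ∑ j, (x j - p j) * G j x` for all `x ∈ U`. -/
theorem stmt_13 {n : ℕ} (hn : 0 < n) (U : Set (Fin n → ℝ)) (hU : IsOpen U)
    (p : Fin n → ℝ) (hp : p ∈ U) (g : (Fin n → ℝ) → ℝ)
    (hg : ContDiffOn ℝ (⊤ : ℕ∞) g U) :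
    ∃ G : Fin n → (Fin n → ℝ) → ℝ,
      (∀ j, ContDiffOn ℝ (⊤ : ℕ∞) (G j) U) ∧
      ∀ x ∈ U, g x = g p + ∑ j, (x j - p j) * G j x := by
  obtain ⟨ε, hε, hεU⟩ := Metric.nhds_basis_closedBall.mem_iff.1 (hU.mem_nhds hp)
  let φ : ContDiffBump p := ⟨ε / 2, ε, half_pos hε, half_lt_self hε⟩
  have hφ : ContDiff ℝ ∞ φ := φ.contDiff
  have hφp : φ p = 1 := φ.eventuallyEq_one.eq_of_nhds
  have hgat : ∀ x ∈ U, ContDiffAt ℝ ∞ g x := fun x hx => hg.contDiffAt (hU.mem_nhds hx)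
  have hf : ContDiff ℝ ∞ (fun x => φ x * g x) := by
    rw [contDiff_iff_contDiffAt]
    intro x
    by_cases hx : x ∈ U
    · exact hφ.contDiffAt.mul (hgat x hx)
    · have hx' : x ∉ tsupport φ := fun h => hx (hεU (φ.tsupport_eq ▸ h))
      refine contDiffAt_const (c := (0 : ℝ)) |>.congr_of_eventuallyEq ?_
      filter_upwards [notMem_tsupport_iff_eventuallyEq.1 hx'] with y hy
      simp [hy]
  obtain ⟨H, hH, hHeq⟩ := exists_hadamard_global p hf
  have hpos : ∀ x, x ≠ p → ∑ i, (x i - p i) ^ 2 ≠ 0 := by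
    intro x hx h
    rw [Finset.sum_eq_zero_iff_of_nonneg fun i _ => sq_nonneg _] at h
    exact hx (funext fun i => sub_eq_zero.1 (pow_eq_zero_iff two_ne_zero |>.1 (h i (by simp))))
  -- At `x = p` the quotient is the junk value `0 / 0 = 0`, which is the correct smooth extension
  -- because the numerator vanishes identically near `p`.
  refine ⟨fun j x => H j x + (x j - p j) * ((1 - φ x) * g x) / ∑ i, (x i - p i) ^ 2,
    fun j x hx => ContDiffAt.contDiffWithinAt ?_, fun x hx => ?_⟩
  · refine (hH j).contDiffAt.add ?_
    by_cases hxp : x = p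
    · subst hxp
      refine contDiffAt_const (c := (0 : ℝ)) |>.congr_of_eventuallyEq ?_
      filter_upwards [φ.eventuallyEq_one] with y hy
      simp [hy]
    · have hc : ∀ i, ContDiffAt ℝ ∞ (fun y : Fin n → ℝ => y i - p i) x := fun i =>
        (contDiff_apply ℝ ℝ i).contDiffAt.sub contDiffAt_const
      exact ((hc j).mul ((contDiffAt_const.sub hφ.contDiffAt).mul (hgat x hx))).div
        (ContDiffAt.sum fun i _ => (hc i).pow 2) (hpos x hxp)
  · by_cases hxp : x = p
    · subst hxp
      simp
    · have h := hHeq x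
      have hrem : ∑ j, (x j - p j) * ((x j - p j) * ((1 - φ x) * g x) / ∑ i, (x i - p i) ^ 2)
          = (1 - φ x) * g x := by
        have : ∀ j, (x j - p j) * ((x j - p j) * ((1 - φ x) * g x) / ∑ i, (x i - p i) ^ 2)
            = (x j - p j) ^ 2 * ((1 - φ x) * g x / ∑ i, (x i - p i) ^ 2) := fun j => by ring
        simp only [this]
        rw [← Finset.sum_mul, mul_div_cancel₀ _ (hpos x hxp)]
      simp only [mul_add, Finset.sum_add_distrib, hrem]
      rw [hφp] at h
      linarith
end

section
/- Let n be a positive integer and let A be the ℝ-subalgebra of the ring of all functions ℝⁿ → ℝ consisting of the infinitely differentiable functions (those f with ContDiff ℝ ⊤ f). Then every unital ℝ-algebra homomorphism φ : A → ℝ is given by evaluation at a point: there exists p ∈ ℝⁿ such that φ(f) = f(p) for every smooth f : ℝⁿ → ℝ. No continuity assumption on φ is made. -/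
/-!
A function in the kernel of a character `φ` must vanish somewhere, since a nowhere vanishing
smooth function has a smooth inverse (`exists_zero_of_map_eq_zero`). With `pᵢ = φ(xᵢ)` the images
of the coordinate functions, the function `(f - φ(f))² + ∑ᵢ (xᵢ - pᵢ)²` lies in the kernel, and
being a sum of squares it can vanish only at `p`, and there only if `f(p) = φ(f)`.
-/

/-- The `ℝ`-subalgebra of the ring of all functions `ℝⁿ → ℝ` consisting of the smooth
(infinitely differentiable) functions. -/
def smoothSubalgebra (n : ℕ) : Subalgebra ℝ ((Fin n → ℝ) → ℝ) where
  carrier := {f : (Fin n → ℝ) → ℝ | ContDiff ℝ (⊤ : ℕ∞) f}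
  mul_mem' := by
    intro a b ha hb
    simp only [Set.mem_setOf_eq] at ha hb ⊢
    exact ha.mul hb
  add_mem' := by
    intro a b ha hb
    simp only [Set.mem_setOf_eq] at ha hb ⊢
    exact ha.add hb
  one_mem' := by
    simp only [Set.mem_setOf_eq]
    exact contDiff_const
  zero_mem' := by
    simp only [Set.mem_setOf_eq]
    exact contDiff_const
  algebraMap_mem' := by
    intro r
    simp only [Set.mem_setOf_eq]
    exact contDiff_const

theorem exists_zero_of_map_eq_zero_s14 {n : ℕ} (φ : smoothSubalgebra n →ₐ[ℝ] ℝ)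
    (g : smoothSubalgebra n) (hg : φ g = 0) : ∃ y, (g : (Fin n → ℝ) → ℝ) y = 0 := by
  by_contra! h
  have hs : ContDiff ℝ (⊤ : ℕ∞) (g : (Fin n → ℝ) → ℝ) := g.2
  let k : smoothSubalgebra n :=
    ⟨fun y => ((g : (Fin n → ℝ) → ℝ) y)⁻¹, show ContDiff ℝ (⊤ : ℕ∞) _ from hs.inv h⟩
  have hgk : g * k = 1 := Subtype.ext (funext fun y => mul_inv_cancel₀ (h y))
  have := congrArg φ hgk
  rw [map_mul, hg, zero_mul, map_one] at this
  exact zero_ne_one this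

/-- Every unital `ℝ`-algebra homomorphism from the algebra of smooth functions on `ℝⁿ`
to `ℝ` is evaluation at a point (no continuity assumed). -/
theorem stmt_14 {n : ℕ} (hn : 0 < n) (φ : smoothSubalgebra n →ₐ[ℝ] ℝ) :
    ∃ p : Fin n → ℝ, ∀ f : smoothSubalgebra n, φ f = (f : (Fin n → ℝ) → ℝ) p := by
  let x : Fin n → smoothSubalgebra n := fun i =>
    ⟨fun y => y i, show ContDiff ℝ (⊤ : ℕ∞) _ from contDiff_apply ℝ ℝ i⟩
  refine ⟨fun i => φ (x i), fun f => ?_⟩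
  let g : smoothSubalgebra n := (f - algebraMap ℝ _ (φ f)) ^ 2 +
    ∑ i, (x i - algebraMap ℝ _ (φ (x i))) ^ 2
  have hφg : φ g = 0 := by simp [g]
  have hg (y : Fin n → ℝ) :
      (g : (Fin n → ℝ) → ℝ) y = ((f : (Fin n → ℝ) → ℝ) y - φ f) ^ 2 +
        ∑ i, (y i - φ (x i)) ^ 2 := by
    simp [g, x, Finset.sum_apply]
  obtain ⟨y, hy⟩ := exists_zero_of_map_eq_zero_s14 φ g hφg
  rw [hg, add_eq_zero_iff_of_nonneg (sq_nonneg _) (Finset.sum_nonneg fun i _ => sq_nonneg _),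
    Finset.sum_eq_zero_iff_of_nonneg fun i _ => sq_nonneg _] at hy
  have hyp : y = fun i => φ (x i) := funext fun i =>
    sub_eq_zero.mp (pow_eq_zero_iff two_ne_zero |>.mp (hy.2 i (Finset.mem_univ i)))
  rw [← hyp]
  exact (sub_eq_zero.mp (pow_eq_zero_iff two_ne_zero |>.mp hy.1)).symm
end

section
/- Let U ⊆ ℂ × ℂ be an open set, let f : ℂ × ℂ → ℂ be holomorphic on U (DifferentiableOn ℂ f U), and let p ∈ U with f(p) = 0. Then p is not an isolated zero of f: for every ε > 0 there exists z ∈ U with z ≠ p, dist(z, p) < ε, and f(z) = 0. -/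
/-! Suppose `p = (a, b)` were the only zero of `f` in a closed bidisc of radius `r` around `p`.
The compact set `closedBall a r ×ˢ sphere b r` avoids `p`, so `‖f‖ ≥ m > 0` there. For `x ≠ a` in
the closed disc around `a`, the slice `f (x, ·)` has no zero in `closedBall b r`, so the maximum
principle applied to `1 / f (x, ·)` gives `‖f (x, b)‖ ≥ m`. Letting `x → a` contradicts
`f (a, b) = 0`. -/

/-- The minimum modulus principle on a disc, at its centre. -/
lemma le_norm_center_of_le_norm_sphere {g : ℂ → ℂ} {b : ℂ} {r m : ℝ} (hr : 0 < r) (hm : 0 < m)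
    (hg : DifferentiableOn ℂ g (Metric.closedBall b r))
    (h0 : ∀ w ∈ Metric.closedBall b r, g w ≠ 0)
    (hs : ∀ w ∈ Metric.sphere b r, m ≤ ‖g w‖) : m ≤ ‖g b‖ := by
  have hd : DiffContOnCl ℂ (fun w => (g w)⁻¹) (Metric.ball b r) :=
    DifferentiableOn.diffContOnCl (by
      rw [closure_ball b hr.ne']
      exact hg.inv h0)
  have hb : ‖(g b)⁻¹‖ ≤ m⁻¹ := by
    refine Complex.norm_le_of_forall_mem_frontier_norm_le Metric.isBounded_ball hd
      (fun w hw => ?_) (subset_closure (Metric.mem_ball_self hr))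
    rw [frontier_ball b hr.ne'] at hw
    rw [norm_inv]
    exact inv_anti₀ hm (hs w hw)
  rw [norm_inv] at hb
  exact (inv_le_inv₀ (norm_pos_iff.2 (h0 b (Metric.mem_closedBall_self hr.le))) hm).1 hb

/-- A holomorphic function of two complex variables has no isolated zeros: if `f` is
holomorphic on an open set `U ⊆ ℂ × ℂ` and `f p = 0` for some `p ∈ U`, then every
neighborhood of `p` contains another zero of `f` in `U`. -/
theorem stmt_16 (U : Set (ℂ × ℂ)) (hU : IsOpen U) (f : ℂ × ℂ → ℂ)
    (hf : DifferentiableOn ℂ f U) (p : ℂ × ℂ) (hp : p ∈ U) (hfp : f p = 0) :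
    ∀ ε > 0, ∃ z ∈ U, z ≠ p ∧ dist z p < ε ∧ f z = 0 := by
  intro ε hε
  by_contra! hne
  obtain ⟨δ, hδ, hδU⟩ := Metric.isOpen_iff.1 hU p hp
  obtain ⟨r, hr, hrlt⟩ := exists_between (lt_min hε hδ)
  obtain ⟨hrε, hrδ⟩ := lt_min_iff.1 hrlt
  obtain ⟨a, b⟩ := p
  have hsub : Metric.closedBall a r ×ˢ Metric.closedBall b r ⊆ U := by
    rw [closedBall_prod_same]
    exact (Metric.closedBall_subset_ball hrδ).trans hδU
  have hnz : ∀ x ∈ Metric.closedBall a r, ∀ w ∈ Metric.closedBall b r, (x, w) ≠ (a, b) →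
      f (x, w) ≠ 0 := fun x hx w hw hxw =>
    hne (x, w) (hsub ⟨hx, hw⟩) hxw ((max_le hx hw : dist (x, w) (a, b) ≤ r).trans_lt hrε)
  have hsphere : ∀ w ∈ Metric.sphere b r, w ≠ b := fun w hw => Metric.ne_of_mem_sphere hw hr.ne'
  obtain ⟨m, hm, hmle⟩ : ∃ m > 0, ∀ z ∈ Metric.closedBall a r ×ˢ Metric.sphere b r,
      m ≤ ‖f z‖ := by
    refine ((isCompact_closedBall a r).prod (isCompact_sphere b r)).exists_forall_le' (a := 0)
      (f := fun z => ‖f z‖) ?_ ?_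
    · exact (hf.continuousOn.mono ((Set.prod_mono_right Metric.sphere_subset_closedBall).trans
        hsub)).norm
    · rintro ⟨x, w⟩ ⟨hx, hw⟩
      exact norm_pos_iff.2 (hnz x hx w (Metric.sphere_subset_closedBall hw)
        fun h => hsphere w hw (congrArg Prod.snd h))
  have key : ∀ x ∈ Metric.closedBall a r, x ≠ a → m ≤ ‖f (x, b)‖ := by
    intro x hx hxa
    refine le_norm_center_of_le_norm_sphere (g := fun w => f (x, w)) hr hm ?_ ?_ ?_
    · exact hf.comp (by fun_prop) fun w hw => hsub ⟨hx, hw⟩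
    · exact fun w hw => hnz x hx w hw fun h => hxa (congrArg Prod.fst h)
    · exact fun w hw => hmle (x, w) ⟨hx, hw⟩
  have hcont : ContinuousAt (fun x => ‖f (x, b)‖) a := by
    have h1 : ContinuousAt f (a, b) := hf.continuousOn.continuousAt (hU.mem_nhds hp)
    exact (ContinuousAt.comp (f := fun x : ℂ => (x, b)) h1 (by fun_prop)).norm
  have hlim : m ≤ ‖f (a, b)‖ := by
    refine ge_of_tendsto (hcont.tendsto.mono_left (nhdsWithin_le_nhds (s := {a}ᶜ))) ?_
    filter_upwards [self_mem_nhdsWithin,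
      nhdsWithin_le_nhds (Metric.closedBall_mem_nhds a hr)] with x hxa hx
    exact key x hx hxa
  rw [hfp, norm_zero] at hlim
  exact hm.not_ge hlim
end
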